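/- Let s > 1, q ∈ [1,∞), let ω be an s-admissible weight on ℝ^d, let A be an invertible d×d real matrix, 0 < c < 2π, Λ₂ = c·(Aᵀ)^{−1}(ℤ^d), and D₁ = x₁ + A([0,1]^d) for some x₁ ∈ ℝ^d. Let f ∈ L¹(ℝ^d) whose support is a compact subset of the interior of D₁, and let Γ₀ ⊂⊂ Γ be open cones in ℝ^d ∖ {0}. If Σ_{λ ∈ Λ₂ ∩ Γ} (|f̂(λ)|·ω(λ))^q < ∞, then for every s-cutoff ψ one has Σ_{λ ∈ Λ₂ ∩ Γ₀} (|ℱ(ψf)(λ)|·ω(λ))^q < ∞. -/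

import Mathlib

open MeasureTheory Complex Set
open scoped ENNReal RealInnerProductSpace NNReal

noncomputable section

namespace Paper

variable {d : ℕ}

/-- The Fourier transform, normalized by `(2π)^{-d/2}`. -/
def FT (f : EuclideanSpace ℝ (Fin d) → ℂ) (ξ : EuclideanSpace ℝ (Fin d)) : ℂ :=
  ((2 * Real.pi) ^ (-(d : ℝ) / 2) : ℝ) *
    ∫ x, f x * Complex.exp (-(⟪x, ξ⟫ : ℝ) * Complex.I)

/-- The short-time Fourier transform `V_φ f (x, ξ)`. -/
def STFT (φ f : EuclideanSpace ℝ (Fin d) → ℂ) (x ξ : EuclideanSpace ℝ (Fin d)) : ℂ :=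
  ((2 * Real.pi) ^ (-(d : ℝ) / 2) : ℝ) *
    ∫ y, f y * (starRingEnd ℂ) (φ (y - x)) * Complex.exp (-(⟪ξ, y⟫ : ℝ) * Complex.I)

/-- A cone in `ℝ^d ∖ {0}`. -/
def IsCone (Γ : Set (EuclideanSpace ℝ (Fin d))) : Prop :=
  (0 : EuclideanSpace ℝ (Fin d)) ∉ Γ ∧ ∀ ξ ∈ Γ, ∀ t : ℝ, 0 < t → t • ξ ∈ Γ

/-- An `s`-cutoff: smooth, compactly supported, with Fourier transform decaying faster
than every `exp (-N |ξ|^{1/s})`. -/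
def IsSCutoff (s : ℝ) (φ : EuclideanSpace ℝ (Fin d) → ℂ) : Prop :=
  ContDiff ℝ (⊤ : ℕ∞) φ ∧ HasCompactSupport φ ∧
    ∀ N : ℝ, 0 < N → ∃ C : ℝ, 0 < C ∧
      ∀ ξ, ‖FT φ ξ‖ ≤ C * Real.exp (-N * ‖ξ‖ ^ (1 / s))

/-- An `s`-admissible weight: positive, measurable, and moderate with respect to an even
submultiplicative weight of sub-exponential growth of order `1/s`. -/
def IsSAdmissible (s : ℝ) (ω : EuclideanSpace ℝ (Fin d) → ℝ) : Prop :=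
  Measurable ω ∧ (∀ x, 0 < ω x) ∧
    ∃ v : EuclideanSpace ℝ (Fin d) → ℝ, Measurable v ∧ (∀ x, 0 < v x) ∧
      (∀ x, v (-x) = v x) ∧ (∀ x y, v (x + y) ≤ v x * v y) ∧
      ∃ C₀ k₀ C₁ : ℝ, 0 < C₀ ∧ 0 < k₀ ∧ 0 < C₁ ∧
        (∀ ξ, v ξ ≤ C₀ * Real.exp (k₀ * ‖ξ‖ ^ (1 / s))) ∧
        ∀ x y, ω (x + y) ≤ C₁ * v x * ω y

/-- The Fourier–Lebesgue seminorm `( ∫_Γ (|f̂| ω)^q )^{1/q}` (ess-sup when `q = ∞`). -/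
def FLSemi (ω : EuclideanSpace ℝ (Fin d) → ℝ) (q : ℝ≥0∞)
    (f : EuclideanSpace ℝ (Fin d) → ℂ) (Γ : Set (EuclideanSpace ℝ (Fin d))) : ℝ≥0∞ :=
  eLpNorm (fun ξ => ‖FT f ξ‖ * ω ξ) q (volume.restrict Γ)

/-- The Fourier–Lebesgue wave-front set `WF_{FL^q_ω} f`. -/
def WF_FL (s : ℝ) (q : ℝ≥0∞) (ω : EuclideanSpace ℝ (Fin d) → ℝ)
    (f : EuclideanSpace ℝ (Fin d) → ℂ) :
    Set (EuclideanSpace ℝ (Fin d) × EuclideanSpace ℝ (Fin d)) :=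
  {z | z.2 ≠ 0 ∧ ∀ φ : EuclideanSpace ℝ (Fin d) → ℂ, IsSCutoff s φ → φ z.1 ≠ 0 →
    ∀ Γ : Set (EuclideanSpace ℝ (Fin d)), IsOpen Γ → IsCone Γ → z.2 ∈ Γ →
      FLSemi ω q (fun x => φ x * f x) Γ = ∞}

/-- The `s`-wave-front set `WF_s f`. -/
def WFs (s : ℝ) (f : EuclideanSpace ℝ (Fin d) → ℂ) :
    Set (EuclideanSpace ℝ (Fin d) × EuclideanSpace ℝ (Fin d)) :=
  {z | z.2 ≠ 0 ∧ ¬ ∃ φ : EuclideanSpace ℝ (Fin d) → ℂ, IsSCutoff s φ ∧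
    (∃ U : Set (EuclideanSpace ℝ (Fin d)), IsOpen U ∧ z.1 ∈ U ∧ ∀ x ∈ U, φ x = 1) ∧
    ∃ Γ : Set (EuclideanSpace ℝ (Fin d)), IsOpen Γ ∧ IsCone Γ ∧ z.2 ∈ Γ ∧
      ∃ C k : ℝ, 0 < C ∧ 0 < k ∧
        ∀ ξ ∈ Γ, ‖FT (fun x => φ x * f x) ξ‖ ≤ C * Real.exp (-k * ‖ξ‖ ^ (1 / s))}

/-- The mixed modulation-space seminorm
`( ∫_Γ ( ∫ |V_g F(x,ξ)|^p dx )^{q/p} ω(ξ)^q dξ )^{1/q}` with the usual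
ess-sup interpretations for `p = ∞` or `q = ∞`. -/
def ModSemi (g F : EuclideanSpace ℝ (Fin d) → ℂ) (ω : EuclideanSpace ℝ (Fin d) → ℝ)
    (p q : ℝ≥0∞) (Γ : Set (EuclideanSpace ℝ (Fin d))) : ℝ≥0∞ :=
  if q = ∞ then
    essSup (fun ξ => eLpNorm (fun x => STFT g F x ξ) p volume * ENNReal.ofReal (ω ξ))
      (volume.restrict Γ)
  else
    (∫⁻ ξ in Γ, (eLpNorm (fun x => STFT g F x ξ) p volume * ENNReal.ofReal (ω ξ)) ^ q.toReal) ^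
      (1 / q.toReal)

/-- The modulation wave-front set `WF_{M^{p,q}_ω} f`, with window `g`. -/
def WF_M (s : ℝ) (p q : ℝ≥0∞) (ω : EuclideanSpace ℝ (Fin d) → ℝ)
    (g f : EuclideanSpace ℝ (Fin d) → ℂ) :
    Set (EuclideanSpace ℝ (Fin d) × EuclideanSpace ℝ (Fin d)) :=
  {z | z.2 ≠ 0 ∧ ∀ φ : EuclideanSpace ℝ (Fin d) → ℂ, IsSCutoff s φ → φ z.1 ≠ 0 →
    ∀ Γ : Set (EuclideanSpace ℝ (Fin d)), IsOpen Γ → IsCone Γ → z.2 ∈ Γ →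
      ModSemi g (fun x => φ x * f x) ω p q Γ = ∞}

/-- Reinterpret a plain vector as a point of Euclidean space. -/
def toE (x : Fin d → ℝ) : EuclideanSpace ℝ (Fin d) :=
  (EuclideanSpace.equiv (Fin d) ℝ).symm x

/-- The point `A k` of the lattice `A(ℤ^d)`. -/
def latPt (A : Matrix (Fin d) (Fin d) ℝ) (k : Fin d → ℤ) : EuclideanSpace ℝ (Fin d) :=
  toE (A.mulVec fun i => (k i : ℝ))

/-- The point `c (Aᵀ)⁻¹ k` of the dual lattice `c (Aᵀ)⁻¹(ℤ^d)`. -/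
def dualLatPt (A : Matrix (Fin d) (Fin d) ℝ) (c : ℝ) (k : Fin d → ℤ) :
    EuclideanSpace ℝ (Fin d) :=
  toE (c • (A.transpose⁻¹.mulVec fun i => (k i : ℝ)))

/-- The parallelepiped `x₁ + A([0,1]^d)`. -/
def lattPara (A : Matrix (Fin d) (Fin d) ℝ) (x₁ : EuclideanSpace ℝ (Fin d)) :
    Set (EuclideanSpace ℝ (Fin d)) :=
  (fun t : Fin d → ℝ => x₁ + toE (A.mulVec t)) '' (Set.univ.pi fun _ => Set.Icc 0 1)

/-- The adjoint short-time Fourier transform `V*_φ F`. -/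
def VStar (φ : EuclideanSpace ℝ (Fin d) → ℂ)
    (F : EuclideanSpace ℝ (Fin d) × EuclideanSpace ℝ (Fin d) → ℂ)
    (t : EuclideanSpace ℝ (Fin d)) : ℂ :=
  ((2 * Real.pi) ^ (-(d : ℝ) / 2) : ℝ) *
    ∫ z : EuclideanSpace ℝ (Fin d) × EuclideanSpace ℝ (Fin d),
      F z * Complex.exp ((⟪z.2, t⟫ : ℝ) * Complex.I) * φ (t - z.1)

lemma exp_bound {s : ℝ} (hs : 1 < s) (r : ℕ) :
    ∃ C : ℝ, 0 < C ∧ ∀ t : ℝ, 0 ≤ t → Real.exp (-(t ^ (1 / s))) ≤ C * (1 + t) ^ (-(r : ℝ)) := by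
  obtain ⟨n, hn⟩ := exists_nat_ge (s * r)
  refine ⟨2 ^ r * (n.factorial * Real.exp 1), by positivity, fun t ht => ?_⟩
  set u := t ^ (1 / s) with hu
  have hu0 : 0 ≤ u := by positivity
  have hus : t = u ^ s := by
    rw [hu, ← Real.rpow_mul ht, one_div_mul_cancel (by linarith), Real.rpow_one]
  have h1 : 1 + t ≤ 2 * (1 + u) ^ s := by
    have a1 : (1 : ℝ) ≤ (1 + u) ^ s := Real.one_le_rpow (by linarith) (by linarith)
    have a2 : u ^ s ≤ (1 + u) ^ s := Real.rpow_le_rpow hu0 (by linarith) (by linarith)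
    rw [hus]; linarith
  have h2 : (1 + t) ^ r ≤ 2 ^ r * (n.factorial * Real.exp (1 + u)) := by
    calc (1 + t) ^ r ≤ (2 * (1 + u) ^ s) ^ r := by gcongr
      _ = 2 ^ r * (1 + u) ^ (s * r) := by
        rw [mul_pow, ← Real.rpow_mul_natCast (by positivity)]
      _ ≤ 2 ^ r * (1 + u) ^ (n : ℝ) := by
        gcongr
        linarith
      _ ≤ _ := by
        gcongr
        rw [Real.rpow_natCast]
        have := Real.pow_div_factorial_le_exp (1 + u) (by positivity) n
        rw [div_le_iff₀ (by positivity)] at this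
        linarith
  rw [Real.rpow_neg (by positivity), Real.rpow_natCast, Real.exp_neg, ← div_eq_mul_inv,
    le_div_iff₀ (by positivity), inv_mul_le_iff₀ (by positivity)]
  rw [Real.exp_add] at h2
  nlinarith

lemma integrable_exp {s : ℝ} (hs : 1 < s) :
    Integrable fun ξ : EuclideanSpace ℝ (Fin d) => Real.exp (-(‖ξ‖ ^ (1 / s))) := by
  obtain ⟨C, hC, h⟩ := exp_bound hs (d + 1)
  have hi : Integrable fun ξ : EuclideanSpace ℝ (Fin d) => C * (1 + ‖ξ‖) ^ (-((d + 1 : ℕ) : ℝ)) :=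
    (integrable_one_add_norm (by simp)).const_mul C
  refine hi.mono' ?_ ?_
  · have : Continuous fun ξ : EuclideanSpace ℝ (Fin d) => Real.exp (-(‖ξ‖ ^ (1 / s))) := by
      refine Real.continuous_exp.comp (Continuous.neg ?_)
      exact continuous_norm.rpow_const (fun _ => Or.inr (by positivity))
    exact this.aestronglyMeasurable
  · filter_upwards with ξ
    rw [Real.norm_of_nonneg (by positivity)]
    exact h _ (norm_nonneg _)

lemma norm_rpow_add_le {s : ℝ} (hs : 1 < s) (x y : EuclideanSpace ℝ (Fin d)) :
    ‖x + y‖ ^ (1 / s) ≤ ‖x‖ ^ (1 / s) + ‖y‖ ^ (1 / s) := by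
  have h1 : 1 / s ≤ 1 := by rw [div_le_one (by linarith)]; linarith
  calc ‖x + y‖ ^ (1 / s) ≤ (‖x‖ + ‖y‖) ^ (1 / s) := by
        gcongr; exact norm_add_le x y
    _ ≤ _ := Real.rpow_add_le_add_rpow (norm_nonneg _) (norm_nonneg _) (by positivity) h1

lemma dualLatPt_add (A : Matrix (Fin d) (Fin d) ℝ) (c : ℝ) (j k : Fin d → ℤ) :
    dualLatPt A c (j + k) = dualLatPt A c j + dualLatPt A c k := by
  have : (fun i => (((j + k) i : ℤ) : ℝ)) = (fun i => (j i : ℝ)) + fun i => (k i : ℝ) := by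
    ext i; simp
  simp only [dualLatPt, toE, this, Matrix.mulVec_add, smul_add, map_add]

lemma dualLatPt_sub (A : Matrix (Fin d) (Fin d) ℝ) (c : ℝ) (j k : Fin d → ℤ) :
    dualLatPt A c (j - k) = dualLatPt A c j - dualLatPt A c k := by
  have := dualLatPt_add A c (j - k) k
  rw [sub_add_cancel] at this
  rw [this]; simp

lemma summable_int_pow (d : ℕ) :
    Summable fun k : Fin d → ℤ => ‖(fun i => (k i : ℝ))‖ ^ (-((d + 1 : ℕ) : ℝ)) := by
  let b := Pi.basisFun ℝ (Fin d)
  let L : Submodule ℤ (Fin d → ℝ) := Submodule.span ℤ (Set.range b)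
  have hmem : ∀ k : Fin d → ℤ, (fun i => (k i : ℝ)) ∈ L := by
    intro k
    rw [Module.Basis.mem_span_iff_repr_mem ℤ b]
    intro i
    exact ⟨k i, by simp [b]⟩
  have hr : Module.finrank ℤ L = d := by
    have := ZLattice.rank ℝ L
    simpa using this
  have := ZLattice.summable_norm_rpow L (-((d + 1 : ℕ) : ℝ)) (by rw [hr]; push_cast; linarith)
  refine this.comp_injective (i := fun k : Fin d → ℤ => (⟨_, hmem k⟩ : L)) ?_
  intro j k hjk
  ext i
  have := congrFun (congrArg Subtype.val hjk) i
  simpa using this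

lemma exists_dualLatPt_norm_ge (A : Matrix (Fin d) (Fin d) ℝ) (hA : IsUnit A.det)
    (c : ℝ) (hc0 : 0 < c) :
    ∃ κ : ℝ, 0 < κ ∧ ∀ k : Fin d → ℤ, κ * ‖(fun i => (k i : ℝ))‖ ≤ ‖dualLatPt A c k‖ := by
  let T : EuclideanSpace ℝ (Fin d) →L[ℝ] (Fin d → ℝ) :=
    c⁻¹ • (LinearMap.toContinuousLinearMap (Matrix.mulVecLin A.transpose)) ∘L
      (EuclideanSpace.equiv (Fin d) ℝ : EuclideanSpace ℝ (Fin d) →L[ℝ] (Fin d → ℝ))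
  have hT : ∀ k : Fin d → ℤ, T (dualLatPt A c k) = fun i => (k i : ℝ) := by
    intro k
    have hdet : IsUnit A.transpose.det := by rwa [Matrix.det_transpose]
    change c⁻¹ • A.transpose.mulVec (c • (A.transpose⁻¹.mulVec fun i => (k i : ℝ))) = _
    rw [Matrix.mulVec_smul, Matrix.mulVec_mulVec, Matrix.mul_nonsing_inv _ hdet, smul_smul,
      inv_mul_cancel₀ hc0.ne', Matrix.one_mulVec, one_smul]
  refine ⟨(‖T‖ + 1)⁻¹, by positivity, fun k => ?_⟩
  rw [inv_mul_le_iff₀ (by positivity), ← hT k]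
  refine (T.le_opNorm _).trans ?_
  gcongr; linarith

lemma summable_exp {s : ℝ} (hs : 1 < s) (A : Matrix (Fin d) (Fin d) ℝ) (hA : IsUnit A.det)
    (c : ℝ) (hc0 : 0 < c) :
    Summable fun k : Fin d → ℤ => Real.exp (-(‖dualLatPt A c k‖ ^ (1 / s))) := by
  obtain ⟨C, hC, h⟩ := exp_bound hs (d + 1)
  obtain ⟨κ, hκ, hk⟩ := exists_dualLatPt_norm_ge A hA c hc0
  refine Summable.of_norm_bounded_eventually
    (((summable_int_pow d).mul_left (C * κ ^ (-((d + 1 : ℕ) : ℝ))))) ?_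
  have : {(0 : Fin d → ℤ)}ᶜ ∈ (Filter.cofinite : Filter (Fin d → ℤ)) :=
    (Set.finite_singleton _).compl_mem_cofinite
  filter_upwards [this] with k hk0
  have hk0 : k ≠ 0 := hk0
  have hpos : 0 < ‖(fun i => (k i : ℝ))‖ := by
    rw [norm_pos_iff]
    intro h0
    apply hk0
    ext i
    have := congrFun h0 i
    simpa using this
  rw [Real.norm_of_nonneg (by positivity), mul_assoc, ← Real.mul_rpow hκ.le hpos.le]
  refine (h _ (norm_nonneg _)).trans ?_
  gcongr 1
  refine Real.rpow_le_rpow_of_nonpos (by positivity) ?_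
    (neg_nonpos.2 (Nat.cast_nonneg _))
  linarith [hk k]

lemma cone_sep {Γ₀ Γ : Set (EuclideanSpace ℝ (Fin d))} (h₀c : IsCone Γ₀) (hΓo : IsOpen Γ)
    (hΓc : IsCone Γ) (hsub : closure Γ₀ \ {0} ⊆ Γ) :
    ∃ δ : ℝ, 0 < δ ∧ ∀ ξ ∈ Γ₀, ∀ η, η ∉ Γ → δ * ‖ξ‖ ≤ ‖ξ - η‖ := by
  let S := closure Γ₀ ∩ Metric.sphere 0 1
  have hS : IsCompact S := (isCompact_sphere 0 1).inter_left isClosed_closure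
  have hSΓ : S ⊆ Γ := fun x hx => hsub ⟨hx.1, by
    rintro rfl
    simpa using hx.2⟩
  obtain ⟨δ, hδ, hd⟩ := hS.exists_thickening_subset_open hΓo hSΓ
  refine ⟨δ, hδ, fun ξ hξ η hη => ?_⟩
  by_contra! hlt
  have hξ0 : 0 < ‖ξ‖ := norm_pos_iff.2 (fun h => h₀c.1 (h ▸ hξ))
  apply hη
  have h1 : ‖ξ‖⁻¹ • η ∈ Γ := by
    apply hd
    rw [Metric.mem_thickening_iff]
    refine ⟨‖ξ‖⁻¹ • ξ, ⟨subset_closure (h₀c.2 ξ hξ _ (by positivity)), ?_⟩, ?_⟩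
    · simp [norm_smul, hξ0.ne']
    · rw [dist_eq_norm, ← smul_sub, norm_smul, norm_sub_rev, norm_inv, norm_norm,
        inv_mul_lt_iff₀ hξ0]
      linarith
  have := hΓc.2 _ h1 ‖ξ‖ hξ0
  rwa [smul_smul, mul_inv_cancel₀ hξ0.ne', one_smul] at this


lemma young {G : Type*} [AddCommGroup G] {q : ℝ} (hq : 1 ≤ q) {b g : G → ℝ} (hb0 : ∀ k, 0 ≤ b k)
    (hg0 : ∀ k, 0 ≤ g k) (hb : Summable b) (hg : Summable fun k => g k ^ q) :
    (∀ k, Summable fun j => b j * g (k - j)) ∧ Summable fun k => (∑' j, b j * g (k - j)) ^ q := by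
  have hq0 : 0 < q := by linarith
  have hprod : Summable fun p : G × G => b p.1 * g p.2 ^ q :=
    hb.mul_of_nonneg hg hb0 (fun k => by have := hg0 k; positivity)
  let e : G × G ≃ G × G :=
    { toFun := fun p => (p.2, p.1 - p.2)
      invFun := fun p => (p.1 + p.2, p.1)
      left_inv := fun p => by simp
      right_inv := fun p => by simp }
  have hprod2 : Summable fun p : G × G => b p.2 * g (p.1 - p.2) ^ q :=
    (e.summable_iff (f := fun p : G × G => b p.1 * g p.2 ^ q)).2 hprod
  have hrow : ∀ k, Summable fun j => b j * g (k - j) ^ q := fun k => hprod2.prod_factor k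
  have hB0 : 0 ≤ ∑' j, b j := tsum_nonneg hb0
  have hqi : 0 ≤ 1 - q⁻¹ := by
    have := inv_le_one_of_one_le₀ hq; linarith
  have hpart : ∀ k (S : Finset G), ∑ j ∈ S, b j * g (k - j) ≤
      (∑' j, b j) ^ (1 - q⁻¹) * (∑' j, b j * g (k - j) ^ q) ^ q⁻¹ := by
    intro k S
    refine (Real.inner_le_weight_mul_Lp_of_nonneg S hq b (fun j => g (k - j)) hb0
      (fun j => hg0 _)).trans ?_
    have h0 : ∀ j, 0 ≤ b j * g (k - j) ^ q := fun j =>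
      mul_nonneg (hb0 _) (Real.rpow_nonneg (hg0 _) _)
    have h1 := hb.sum_le_tsum S (fun j _ => hb0 j)
    have h2 := (hrow k).sum_le_tsum S (fun j _ => h0 j)
    have h3 : 0 ≤ ∑ j ∈ S, b j := Finset.sum_nonneg fun j _ => hb0 j
    have h4 : 0 ≤ ∑ j ∈ S, b j * g (k - j) ^ q := Finset.sum_nonneg fun j _ => h0 j
    gcongr
  have h0 : ∀ k j, 0 ≤ b j * g (k - j) := fun k j => mul_nonneg (hb0 _) (hg0 _)
  have hs : ∀ k, Summable fun j => b j * g (k - j) := fun k =>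
    summable_of_sum_le (h0 k) (hpart k)
  refine ⟨hs, ?_⟩
  refine Summable.of_nonneg_of_le (fun k => Real.rpow_nonneg (tsum_nonneg (h0 k)) _)
    (fun k => ?_) ((hprod2.prod).mul_left (((∑' j, b j) ^ (1 - q⁻¹)) ^ q))
  have h1 := (hs k).tsum_le_of_sum_le (hpart k)
  have h2 : 0 ≤ ∑' j, b j * g (k - j) ^ q := tsum_nonneg fun j =>
      mul_nonneg (hb0 _) (Real.rpow_nonneg (hg0 _) _)
  refine (Real.rpow_le_rpow (tsum_nonneg (h0 k)) h1 hq0.le).trans ?_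
  rw [Real.mul_rpow (by positivity) (by positivity), ← Real.rpow_mul h2, inv_mul_cancel₀ hq0.ne',
    Real.rpow_one]


open scoped FourierTransform

/-- Sub-exponential decay of every order of the Fourier transform. -/
def Dec (s : ℝ) (φ : EuclideanSpace ℝ (Fin d) → ℂ) : Prop :=
  ∀ N : ℝ, 0 < N → ∃ C : ℝ, 0 < C ∧ ∀ ξ, ‖FT φ ξ‖ ≤ C * Real.exp (-N * ‖ξ‖ ^ (1 / s))

lemma FT_eq_fourier (f : EuclideanSpace ℝ (Fin d) → ℂ) (ξ : EuclideanSpace ℝ (Fin d)) :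
    FT f ξ = ((2 * Real.pi) ^ (-(d : ℝ) / 2) : ℝ) * 𝓕 f ((2 * Real.pi)⁻¹ • ξ) := by
  rw [FT, Real.fourier_eq']
  congr 1
  refine integral_congr_ae (Filter.Eventually.of_forall fun x => ?_)
  simp only [inner_smul_right, smul_eq_mul]
  rw [mul_comm]
  congr 2
  have : (Real.pi : ℂ) ≠ 0 := by exact_mod_cast Real.pi_ne_zero
  push_cast
  field_simp

lemma fourier_eq_FT (f : EuclideanSpace ℝ (Fin d) → ℂ) (ξ : EuclideanSpace ℝ (Fin d)) :
    𝓕 f ξ = ((2 * Real.pi) ^ ((d : ℝ) / 2) : ℝ) * FT f ((2 * Real.pi) • ξ) := by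
  rw [FT_eq_fourier, smul_smul, inv_mul_cancel₀ (by positivity), one_smul, ← mul_assoc,
    ← Complex.ofReal_mul, ← Real.rpow_add (by positivity)]
  simp [neg_div]

lemma norm_FT_le (f : EuclideanSpace ℝ (Fin d) → ℂ) (ξ : EuclideanSpace ℝ (Fin d)) :
    ‖FT f ξ‖ ≤ (2 * Real.pi) ^ (-(d : ℝ) / 2) * ∫ x, ‖f x‖ := by
  rw [FT, norm_mul, Complex.norm_real, Real.norm_of_nonneg (by positivity)]
  gcongr
  refine (norm_integral_le_integral_norm _).trans (le_of_eq ?_)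
  congr 1
  ext x
  rw [norm_mul]
  have : ‖Complex.exp (-(⟪x, ξ⟫ : ℝ) * Complex.I)‖ = 1 := by
    rw [← Complex.ofReal_neg, Complex.norm_exp_ofReal_mul_I]
  rw [this, mul_one]

lemma continuous_fourier' {f : EuclideanSpace ℝ (Fin d) → ℂ} (hf : Integrable f) :
    Continuous (𝓕 f) :=
  VectorFourier.fourierIntegral_continuous Real.continuous_fourierChar
    (by exact continuous_inner) hf

lemma continuous_FT {f : EuclideanSpace ℝ (Fin d) → ℂ} (hf : Integrable f) :
    Continuous (FT f) := by
  have := continuous_fourier' hf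
  have h : FT f = fun ξ => ((2 * Real.pi) ^ (-(d : ℝ) / 2) : ℝ) * 𝓕 f ((2 * Real.pi)⁻¹ • ξ) :=
    funext fun ξ => FT_eq_fourier f ξ
  rw [h]
  fun_prop

lemma Dec.integrable_FT {s : ℝ} (hs : 1 < s) {φ : EuclideanSpace ℝ (Fin d) → ℂ}
    (hφ : Integrable φ) (h : Dec s φ) : Integrable (FT φ) := by
  obtain ⟨C, hC, hb⟩ := h 1 one_pos
  refine ((integrable_exp hs).const_mul C).mono' (continuous_FT hφ).aestronglyMeasurable ?_
  filter_upwards with ξ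
  simpa using hb ξ

lemma Dec.integrable_fourier {s : ℝ} (hs : 1 < s) {φ : EuclideanSpace ℝ (Fin d) → ℂ}
    (hφ : Integrable φ) (h : Dec s φ) : Integrable (𝓕 φ) := by
  have h1 : 𝓕 φ = fun ξ => ((2 * Real.pi) ^ ((d : ℝ) / 2) : ℝ) * FT φ ((2 * Real.pi) • ξ) :=
    funext fun ξ => fourier_eq_FT φ ξ
  rw [h1]
  exact ((h.integrable_FT hs hφ).comp_smul (by positivity)).const_mul _

/-- inversion formula -/
lemma inversion {s : ℝ} (hs : 1 < s) {φ : EuclideanSpace ℝ (Fin d) → ℂ} (hc : Continuous φ)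
    (hφ : Integrable φ) (h : Dec s φ) (x : EuclideanSpace ℝ (Fin d)) :
    φ x = 𝓕 (𝓕 φ) (-x) := by
  have := congrFun (hc.fourierInv_fourier_eq hφ (h.integrable_fourier hs hφ)) x
  rw [← this, Real.fourierInv_eq_fourier_neg]

lemma fourier_mul {s : ℝ} (hs : 1 < s) {φ χ : EuclideanSpace ℝ (Fin d) → ℂ} (hc : Continuous φ)
    (hφ : Integrable φ) (h : Dec s φ) (hχ : Integrable χ) (w : EuclideanSpace ℝ (Fin d)) :
    𝓕 (fun x => φ x * χ x) w = ∫ v, 𝓕 φ v * 𝓕 χ (w - v) := by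
  have key := VectorFourier.integral_fourierIntegral_smul_eq_flip (L := innerₗ _)
    (f := 𝓕 φ) (g := fun x => 𝐞 (inner ℝ x w) • χ (-x))
    (μ := volume) (ν := volume) (e := 𝐞)
    Real.continuous_fourierChar (by exact continuous_inner) (h.integrable_fourier hs hφ)
    (by
      have := (VectorFourier.fourierIntegral_convergent_iff (μ := volume) (L := innerₗ _)
        Real.continuous_fourierChar (by exact continuous_inner) (-w)).2 hχ.comp_neg
      simpa using this)
  calc 𝓕 (fun x => φ x * χ x) w
      = ∫ x, 𝓕 (𝓕 φ) (-x) * (𝐞 (-inner ℝ x w) • χ x) := by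
        rw [Real.fourier_eq]
        congr 1
        ext x
        rw [inversion hs hc hφ h x]
        simp only [Circle.smul_def, smul_eq_mul]
        ring
    _ = ∫ x, 𝓕 (𝓕 φ) x * (𝐞 (inner ℝ x w) • χ (-x)) := by
        rw [← integral_neg_eq_self]
        simp
    _ = ∫ v, 𝓕 φ v * 𝓕 χ (w - v) := by
        refine key.trans ?_
        congr 1
        ext v
        rw [smul_eq_mul]
        congr 1
        simp only [VectorFourier.fourierIntegral]
        rw [Real.fourier_eq, ← integral_neg_eq_self]
        congr 1
        ext x
        simp only [neg_neg, smul_smul, ← AddChar.map_add_eq_mul, LinearMap.flip_apply,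
          innerₗ_apply_apply, inner_neg_left, inner_neg_right, inner_sub_right, real_inner_comm]
        congr 2
        ring

lemma FT_mul {s : ℝ} (hs : 1 < s) {φ χ : EuclideanSpace ℝ (Fin d) → ℂ} (hc : Continuous φ)
    (hφ : Integrable φ) (h : Dec s φ) (hχ : Integrable χ) :
    ∃ κ : ℝ, 0 < κ ∧ ∀ w, ‖FT (fun x => φ x * χ x) w‖ ≤ κ * ∫ v, ‖FT φ v‖ * ‖FT χ (w - v)‖ := by
  set p : ℝ := (2 * Real.pi) ^ (-(d : ℝ) / 2)
  set p' : ℝ := (2 * Real.pi) ^ ((d : ℝ) / 2)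
  have hp : 0 < p := by positivity
  have hp' : 0 < p' := by positivity
  refine ⟨p * p' * p' * ((2 * Real.pi) ^ d)⁻¹, by positivity, fun w => ?_⟩
  rw [FT_eq_fourier, fourier_mul hs hc hφ h hχ, norm_mul, Complex.norm_real,
    Real.norm_of_nonneg hp.le]
  have e1 : ∫ v, ‖FT φ v‖ * ‖FT χ (w - v)‖ = (2 * Real.pi) ^ d *
      ∫ v, ‖FT φ ((2 * Real.pi) • v)‖ * ‖FT χ (w - (2 * Real.pi) • v)‖ := by
    rw [Measure.integral_comp_smul volume (fun v => ‖FT φ v‖ * ‖FT χ (w - v)‖) (2 * Real.pi)]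
    have : |((2 * Real.pi) ^ d)⁻¹| = ((2 * Real.pi) ^ d)⁻¹ := abs_of_nonneg (by positivity)
    simp only [finrank_euclideanSpace, Fintype.card_fin, this, smul_eq_mul]
    rw [← mul_assoc, mul_inv_cancel₀ (by positivity), one_mul]
  have e2 : ‖∫ v, 𝓕 φ v * 𝓕 χ ((2 * Real.pi)⁻¹ • w - v)‖ ≤
      p' * p' * ∫ v, ‖FT φ ((2 * Real.pi) • v)‖ * ‖FT χ (w - (2 * Real.pi) • v)‖ := by
    refine (norm_integral_le_integral_norm _).trans (le_of_eq ?_)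
    rw [← integral_const_mul]
    congr 1
    ext v
    rw [fourier_eq_FT φ, fourier_eq_FT χ, smul_sub, smul_smul, mul_inv_cancel₀ (by positivity),
      one_smul]
    have hn : ‖((2 * Real.pi) ^ ((d : ℝ) / 2) : ℝ)‖ = p' := Real.norm_of_nonneg hp'.le
    simp only [norm_mul, Complex.norm_real, hn]
    ring
  rw [e1]
  calc _ ≤ p * (p' * p' * ∫ v, ‖FT φ ((2 * Real.pi) • v)‖ * ‖FT χ (w - (2 * Real.pi) • v)‖) := by
        gcongr
    _ = _ := by field_simp

lemma Dec.mul {s : ℝ} (hs : 1 < s) {φ χ : EuclideanSpace ℝ (Fin d) → ℂ} (hc : Continuous φ)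
    (hφ : Integrable φ) (h : Dec s φ) (hχ : Integrable χ) (h' : Dec s χ) :
    Dec s fun x => φ x * χ x := by
  obtain ⟨κ, hκ, hk⟩ := FT_mul hs hc hφ h hχ
  intro N hN
  obtain ⟨C, hC, hb⟩ := h (N + 1) (by linarith)
  obtain ⟨C', hC', hb'⟩ := h' N hN
  set J := ∫ ξ : EuclideanSpace ℝ (Fin d), Real.exp (-(‖ξ‖ ^ (1 / s)))
  have hJ : 0 ≤ J := integral_nonneg fun ξ => (Real.exp_pos _).le
  refine ⟨κ * (C * C' * (J + 1)), by positivity, fun w => (hk w).trans ?_⟩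
  rw [mul_assoc]
  gcongr
  have : ∫ v, ‖FT φ v‖ * ‖FT χ (w - v)‖ ≤
      ∫ v : EuclideanSpace ℝ (Fin d), (C * C' * Real.exp (-N * ‖w‖ ^ (1 / s))) *
        Real.exp (-(‖v‖ ^ (1 / s))) := by
    refine integral_mono_of_nonneg
      (Filter.Eventually.of_forall fun v => by simp only [Pi.zero_apply]; positivity)
      ((integrable_exp hs).const_mul _) (Filter.Eventually.of_forall fun v => ?_)
    have h1 := hb v
    have h2 := hb' (w - v)
    have h3 := norm_rpow_add_le hs (w - v) v
    rw [sub_add_cancel] at h3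
    calc ‖FT φ v‖ * ‖FT χ (w - v)‖ ≤ (C * Real.exp (-(N + 1) * ‖v‖ ^ (1 / s))) *
          (C' * Real.exp (-N * ‖w - v‖ ^ (1 / s))) := by gcongr
      _ = C * C' * Real.exp (-(N + 1) * ‖v‖ ^ (1 / s) + -N * ‖w - v‖ ^ (1 / s)) := by
        rw [Real.exp_add]; ring
      _ ≤ C * C' * Real.exp (-N * ‖w‖ ^ (1 / s) + -(‖v‖ ^ (1 / s))) := by
        refine mul_le_mul_of_nonneg_left (Real.exp_le_exp.2 ?_) (by positivity)
        nlinarith [mul_le_mul_of_nonneg_left h3 hN.le]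
      _ = _ := by rw [Real.exp_add]; ring
  rw [integral_const_mul] at this
  have h5 : 0 ≤ C * C' * Real.exp (-N * ‖w‖ ^ (1 / s)) := by positivity
  change _ ≤ C * C' * Real.exp (-N * ‖w‖ ^ (1 / s)) * J at this
  linarith

lemma Dec.modulate {s : ℝ} (hs : 1 < s) {φ : EuclideanSpace ℝ (Fin d) → ℂ} (h : Dec s φ)
    (η : EuclideanSpace ℝ (Fin d)) :
    Dec s fun x => φ x * Complex.exp (-(⟪x, η⟫ : ℝ) * Complex.I) := by
  have e : ∀ ξ, FT (fun x => φ x * Complex.exp (-(⟪x, η⟫ : ℝ) * Complex.I)) ξ = FT φ (ξ + η) := by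
    intro ξ
    simp only [FT]
    congr 2
    ext x
    rw [mul_assoc, ← Complex.exp_add, inner_add_right]
    congr 2
    push_cast
    ring
  intro N hN
  obtain ⟨C, hC, hb⟩ := h N hN
  refine ⟨C * Real.exp (N * ‖η‖ ^ (1 / s)), by positivity, fun ξ => ?_⟩
  rw [e, mul_assoc, ← Real.exp_add]
  refine (hb _).trans ?_
  gcongr
  have h3 := norm_rpow_add_le hs (ξ + η) (-η)
  rw [add_neg_cancel_right, norm_neg] at h3
  nlinarith

lemma Dec.const_mul {s : ℝ} {φ : EuclideanSpace ℝ (Fin d) → ℂ} (h : Dec s φ) (a : ℂ) :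
    Dec s fun x => a * φ x := by
  intro N hN
  obtain ⟨C, hC, hb⟩ := h N hN
  refine ⟨(‖a‖ + 1) * C, by positivity, fun ξ => ?_⟩
  have : FT (fun x => a * φ x) ξ = a * FT φ ξ := by
    simp only [FT, mul_assoc, integral_const_mul]
    ring
  rw [this, norm_mul, mul_assoc]
  have := hb ξ
  gcongr
  linarith

lemma FT_scale (φ : EuclideanSpace ℝ (Fin d) → ℂ) {ε : ℝ} (hε : 0 < ε)
    (ξ : EuclideanSpace ℝ (Fin d)) :
    FT (fun x => φ (ε⁻¹ • x)) ξ = (ε ^ d : ℝ) * FT φ (ε • ξ) := by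
  have := Measure.integral_comp_smul volume
    (fun x => φ x * Complex.exp (-(⟪x, ε • ξ⟫ : ℝ) * Complex.I)) ε⁻¹
  simp only [FT]
  have e : ∀ x : EuclideanSpace ℝ (Fin d), (⟪ε⁻¹ • x, ε • ξ⟫ : ℝ) = ⟪x, ξ⟫ := by
    intro x
    rw [inner_smul_left, inner_smul_right]
    simp
    field_simp
  simp only [e] at this
  rw [this]
  have : |((ε⁻¹) ^ d)⁻¹| = ε ^ d := by
    rw [abs_of_nonneg (by positivity)]; simp
  simp only [finrank_euclideanSpace, Fintype.card_fin, this, Complex.real_smul]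
  ring

lemma Dec.scale {s : ℝ} {φ : EuclideanSpace ℝ (Fin d) → ℂ} (h : Dec s φ)
    {ε : ℝ} (hε : 0 < ε) : Dec s fun x => φ (ε⁻¹ • x) := by
  intro N hN
  obtain ⟨C, hC, hb⟩ := h (N / ε ^ (1 / s)) (by positivity)
  refine ⟨ε ^ d * C, by positivity, fun ξ => ?_⟩
  rw [FT_scale φ hε, norm_mul, Complex.norm_real, Real.norm_of_nonneg (by positivity), mul_assoc]
  gcongr
  refine (hb _).trans (le_of_eq ?_)
  rw [norm_smul, Real.norm_of_nonneg hε.le, Real.mul_rpow hε.le (norm_nonneg _)]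
  congr 2
  have : 0 < ε ^ (1 / s) := by positivity
  field_simp

open scoped Convolution in
lemma Dec.conv {s : ℝ} {φ g : EuclideanSpace ℝ (Fin d) → ℂ} (h : Dec s φ)
    (hφ : Integrable φ) (hg : Integrable g) :
    Dec s (φ ⋆[ContinuousLinearMap.mul ℂ ℂ] g) := by
  intro N hN
  obtain ⟨C, hC, hb⟩ := h N hN
  set I := ∫ x, ‖g x‖
  have hI : 0 ≤ I := integral_nonneg fun x => norm_nonneg _
  refine ⟨C * (I + 1), by positivity, fun ξ => ?_⟩
  have e : FT (φ ⋆[ContinuousLinearMap.mul ℂ ℂ] g) ξ = FT φ ξ * 𝓕 g ((2 * Real.pi)⁻¹ • ξ) := by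
    rw [FT_eq_fourier, FT_eq_fourier, mul_assoc]
    congr 1
    exact Real.fourier_mul_convolution_eq hφ hg _
  have h2 : ‖𝓕 g ((2 * Real.pi)⁻¹ • ξ)‖ ≤ I :=
    VectorFourier.norm_fourierIntegral_le_integral_norm _ _ _ _ _
  rw [e, norm_mul]
  have := hb ξ
  calc _ ≤ (C * Real.exp (-N * ‖ξ‖ ^ (1 / s))) * I := by gcongr
    _ ≤ (C * Real.exp (-N * ‖ξ‖ ^ (1 / s))) * (I + 1) := by gcongr; linarith
    _ = _ := by ring


open scoped Convolution in
lemma exists_cutoff {s : ℝ} (hs : 1 < s) {ψ : EuclideanSpace ℝ (Fin d) → ℂ} (hψ : IsSCutoff s ψ)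
    (hψ0 : ψ ≠ 0) {K U : Set (EuclideanSpace ℝ (Fin d))} (hK : IsCompact K) (hU : IsOpen U)
    (hKU : K ⊆ U) : ∃ χ : EuclideanSpace ℝ (Fin d) → ℂ, Continuous χ ∧ Integrable χ ∧ Dec s χ ∧
      (∀ x ∈ K, χ x = 1) ∧ ∃ K', IsCompact K' ∧ K' ⊆ U ∧ ∀ x, x ∉ K' → χ x = 0 := by
  obtain ⟨hsm, hcs, hdec⟩ := hψ
  have hdec : Dec s ψ := hdec
  have hcont : Continuous ψ := hsm.continuous
  have hint : Integrable ψ := hcont.integrable_of_hasCompactSupport hcs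
  obtain ⟨η, hη⟩ : ∃ η, FT ψ η ≠ 0 := by
    by_contra! h0
    apply hψ0
    have h1 : 𝓕 ψ = 0 := by
      ext ξ
      rw [fourier_eq_FT, h0]; simp
    ext x
    rw [inversion hs hcont hint hdec x, h1, Real.fourier_eq]
    simp
  set φ0 : EuclideanSpace ℝ (Fin d) → ℂ :=
    fun x => ψ x * Complex.exp (-(⟪x, η⟫ : ℝ) * Complex.I) with hφ0
  have hd0 : Dec s φ0 := hdec.modulate hs η
  have hc0 : Continuous φ0 := by
    have : Continuous fun x : EuclideanSpace ℝ (Fin d) => (⟪x, η⟫ : ℝ) := by fun_prop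
    fun_prop
  have hcs0 : HasCompactSupport φ0 := hcs.mul_right
  have hI0 : ∫ x, φ0 x ≠ 0 := by
    intro h0
    apply hη
    rw [FT]
    change _ * (∫ x, φ0 x) = 0
    rw [h0, mul_zero]
  obtain ⟨R, hR, hRs⟩ : ∃ R : ℝ, 0 < R ∧ ∀ x, φ0 x ≠ 0 → ‖x‖ < R := by
    obtain ⟨R, hR⟩ := hcs0.isCompact.isBounded.exists_norm_le
    refine ⟨|R| + 1, by positivity, fun x hx => ?_⟩
    have := hR x (subset_tsupport _ hx)
    have := le_abs_self R
    linarith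
  obtain ⟨δ, hδ, hδU⟩ := hK.exists_cthickening_subset_open hU hKU
  set ε := δ / 2 / R with hε
  have hε0 : 0 < ε := by positivity
  have hI1 : ∫ x, φ0 (ε⁻¹ • x) ≠ 0 := by
    rw [Measure.integral_comp_smul volume φ0 ε⁻¹]
    refine smul_ne_zero ?_ hI0
    positivity
  set φ : EuclideanSpace ℝ (Fin d) → ℂ :=
    fun x => (∫ x, φ0 (ε⁻¹ • x))⁻¹ * φ0 (ε⁻¹ • x) with hφ
  have hφd : Dec s φ := (hd0.scale hε0).const_mul _
  have hφc : Continuous φ := by fun_prop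
  have hφI : ∫ x, φ x = 1 := by
    rw [hφ, integral_const_mul, inv_mul_cancel₀ hI1]
  have hφs : Function.support φ ⊆ Metric.ball 0 (δ / 2) := by
    intro x hx
    have h1 : φ0 (ε⁻¹ • x) ≠ 0 := right_ne_zero_of_mul hx
    have h2 := hRs _ h1
    rw [norm_smul, Real.norm_of_nonneg (by positivity), inv_mul_lt_iff₀ hε0, hε,
      div_mul_cancel₀ _ hR.ne'] at h2
    simpa using h2
  have hφcs : HasCompactSupport φ :=
    HasCompactSupport.of_support_subset_isCompact (isCompact_closedBall 0 (δ / 2))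
      (hφs.trans Metric.ball_subset_closedBall)
  have hφi : Integrable φ := hφc.integrable_of_hasCompactSupport hφcs
  set L := Metric.cthickening (δ / 2) K with hL
  have hLc : IsCompact L := hK.cthickening
  set g : EuclideanSpace ℝ (Fin d) → ℂ := L.indicator (fun _ => 1) with hg
  have hgi : Integrable g := by
    rw [hg, integrable_indicator_iff hLc.measurableSet]
    exact integrableOn_const hLc.measure_lt_top.ne
  have hχc : Continuous (φ ⋆[ContinuousLinearMap.mul ℂ ℂ] g) :=
    hφcs.continuous_convolution_left _ hφc hgi.locallyIntegrable
  have h0 : ∀ x, x ∉ Metric.cthickening δ K →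
      (φ ⋆[ContinuousLinearMap.mul ℂ ℂ] g) x = 0 := by
    intro x hx
    have hball : ∀ y ∈ Metric.ball x (δ / 2), g y = 0 := by
      intro y hy
      rw [hg, Set.indicator_of_notMem]
      intro hyL
      apply hx
      have := Metric.cthickening_cthickening_subset (δ := δ / 2) (ε := δ / 2)
        (by positivity) (by positivity) K
      rw [add_halves] at this
      apply this
      refine Metric.mem_cthickening_of_dist_le x y _ _ hyL ?_
      rw [dist_comm]
      exact (Metric.mem_ball.1 hy).le
    have hx0 : g x = 0 := hball x (Metric.mem_ball_self (by positivity))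
    rw [convolution_eq_right' _ hφs (fun y hy => (hball y hy).trans hx0.symm), hx0]
    simp
  refine ⟨φ ⋆[ContinuousLinearMap.mul ℂ ℂ] g, hχc, ?_, hφd.conv hφi hgi, ?_,
    Metric.cthickening δ K, hK.cthickening, hδU, h0⟩
  · refine hχc.integrable_of_hasCompactSupport (HasCompactSupport.intro hK.cthickening h0)
  · intro x hx
    have hball : ∀ y ∈ Metric.ball x (δ / 2), g y = 1 := by
      intro y hy
      rw [hg, Set.indicator_of_mem]
      exact Metric.mem_cthickening_of_dist_le y x _ _ hx (Metric.mem_ball.1 hy).le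
    have hx0 : g x = 1 := hball x (Metric.mem_ball_self (by positivity))
    rw [convolution_eq_right' _ hφs (fun y hy => (hball y hy).trans hx0.symm), hx0]
    simpa using hφI

/-- replacing `ψ` by a function supported in `U` -/
lemma exists_local {s : ℝ} (hs : 1 < s) {ψ : EuclideanSpace ℝ (Fin d) → ℂ} (hψ : IsSCutoff s ψ)
    {K U : Set (EuclideanSpace ℝ (Fin d))} (hK : IsCompact K) (hU : IsOpen U)
    (hKU : K ⊆ U) : ∃ m : EuclideanSpace ℝ (Fin d) → ℂ, Continuous m ∧ Dec s m ∧
      (∀ x ∈ K, m x = ψ x) ∧ ∃ K', IsCompact K' ∧ K' ⊆ U ∧ ∀ x, x ∉ K' → m x = 0 := by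
  by_cases hψ0 : ψ = 0
  · refine ⟨ψ, hψ.1.continuous, hψ.2.2, fun _ _ => rfl, ∅, isCompact_empty, Set.empty_subset _, ?_⟩
    intro x _
    rw [hψ0]; rfl
  · obtain ⟨χ, hc, hi, hd, h1, K', hK', hK'U, h0⟩ := exists_cutoff hs hψ hψ0 hK hU hKU
    have hcont : Continuous ψ := hψ.1.continuous
    have hint : Integrable ψ := hcont.integrable_of_hasCompactSupport hψ.2.1
    refine ⟨fun x => ψ x * χ x, hcont.mul hc, Dec.mul hs hcont hint hψ.2.2 hi hd, ?_,
      K', hK', hK'U, ?_⟩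
    · intro x hx
      simp [h1 x hx]
    · intro x hx
      simp [h0 x hx]


lemma mFourier_coe (n : Fin d → ℤ) (t : Fin d → ℝ) :
    UnitAddTorus.mFourier n (fun i => (t i : UnitAddCircle)) =
      Complex.exp (2 * Real.pi * Complex.I * ∑ i, (n i : ℂ) * t i) := by
  simp only [UnitAddTorus.mFourier, ContinuousMap.coe_mk, fourier_coe_apply]
  rw [← Complex.exp_sum, Finset.mul_sum]
  congr 1
  refine Finset.sum_congr rfl fun i _ => ?_
  simp
  ring

/-- Multiple Fourier series of a function supported inside the unit cube. -/
lemma fourier_series {M : (Fin d → ℝ) → ℂ} (hM : Continuous M) {K : Set (Fin d → ℝ)}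
    (hK : IsCompact K) (hKU : ∀ t ∈ K, ∀ i, t i ∈ Set.Ioo (0 : ℝ) 1) (h0 : ∀ t, t ∉ K → M t = 0)
    (hsum : Summable fun n : Fin d → ℤ =>
      ∫ t : Fin d → ℝ, Complex.exp (-(2 * Real.pi * Complex.I * ∑ i, (n i : ℂ) * t i)) * M t)
    (t : Fin d → ℝ) (ht : t ∈ K) :
    HasSum (fun n : Fin d → ℤ =>
      (∫ t : Fin d → ℝ, Complex.exp (-(2 * Real.pi * Complex.I * ∑ i, (n i : ℂ) * t i)) * M t) *
        Complex.exp (2 * Real.pi * Complex.I * ∑ i, (n i : ℂ) * t i)) (M t) := by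
  let π : (Fin d → ℝ) → UnitAddTorus (Fin d) := fun t i => (t i : UnitAddCircle)
  have hπ : Continuous π := by
    refine continuous_pi fun i => ?_
    exact (AddCircle.continuous_mk' 1).comp (continuous_apply i)
  let σ : UnitAddTorus (Fin d) → (Fin d → ℝ) := fun y i => (AddCircle.equivIoc 1 0 (y i) : ℝ)
  have hπσ : ∀ y, π (σ y) = y := by
    intro y
    ext i
    exact AddCircle.coe_equivIoc
  have hσπ : ∀ t : Fin d → ℝ, (∀ i, t i ∈ Set.Ioc (0 : ℝ) (0 + 1)) → σ (π t) = t := by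
    intro t ht
    ext i
    exact AddCircle.equivIoc_coe_of_mem (ht i)
  have hg : Continuous fun y => M (σ y) := by
    rw [continuous_iff_continuousAt]
    intro y
    by_cases hy : ∀ i, y i ≠ ((0 : ℝ) : UnitAddCircle)
    · refine hM.continuousAt.comp ?_
      rw [continuousAt_pi]
      intro i
      have h1 := AddCircle.continuousAt_equivIoc 1 0 (hy i)
      have h2 : ContinuousAt (fun y : UnitAddTorus (Fin d) => y i) y :=
        (continuous_apply i).continuousAt
      exact continuous_subtype_val.continuousAt.comp (ContinuousAt.comp (f := fun
        y : UnitAddTorus (Fin d) => y i) h1 h2)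
    · have hyV : y ∈ (π '' K)ᶜ := by
        rintro ⟨t, htK, rfl⟩
        apply hy
        intro i hi
        have h1 := hKU t htK i
        have h2 : AddCircle.equivIoc 1 0 ((t i : ℝ) : UnitAddCircle) = t i :=
          AddCircle.equivIoc_coe_of_mem ⟨h1.1, by linarith [h1.2]⟩
        have h3 : (AddCircle.equivIoc 1 0 ((1 : ℝ) : UnitAddCircle) : ℝ) = 1 :=
          AddCircle.equivIoc_coe_of_mem ⟨by norm_num, by norm_num⟩
        have h4 : ((t i : ℝ) : UnitAddCircle) = ((1 : ℝ) : UnitAddCircle) := by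
          refine (show ((t i : ℝ) : UnitAddCircle) = ((0 : ℝ) : UnitAddCircle) from hi).trans ?_
          rw [AddCircle.coe_period]
          rfl
        rw [h4, h3] at h2
        linarith [h1.2]
      have hopen : IsOpen (π '' K)ᶜ := (hK.image hπ).isClosed.isOpen_compl
      have : (fun y => M (σ y)) =ᶠ[nhds y] fun _ => 0 := by
        filter_upwards [hopen.mem_nhds hyV] with z hz
        apply h0
        intro hzK
        exact hz ⟨σ z, hzK, hπσ z⟩
      exact (continuousAt_const.congr this.symm)
  let g : C(UnitAddTorus (Fin d), ℂ) := ⟨fun y => M (σ y), hg⟩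
  have hco : ∀ n, UnitAddTorus.mFourierCoeff g n =
      ∫ t : Fin d → ℝ, Complex.exp (-(2 * Real.pi * Complex.I * ∑ i, (n i : ℂ) * t i)) * M t := by
    intro n
    rw [UnitAddTorus.mFourierCoeff_eq_integral g n (fun _ => 0)]
    have hms : MeasurableSet {x : Fin d → ℝ | ∀ i, x i ∈ Set.Ioc (0 : ℝ) (0 + 1)} :=
      MeasurableSet.univ_pi' (fun i => measurableSet_Ioc)
    rw [← integral_indicator hms]
    congr 1
    ext x
    by_cases hx : x ∈ {x : Fin d → ℝ | ∀ i, x i ∈ Set.Ioc (0 : ℝ) (0 + 1)}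
    · rw [Set.indicator_of_mem hx]
      have h1 : g (fun i => (x i : UnitAddCircle)) = M x := by
        change M (σ (π x)) = _
        rw [hσπ x hx]
      rw [h1, mFourier_coe, smul_eq_mul]
      simp
    · rw [Set.indicator_of_notMem hx, h0 x, mul_zero]
      intro hxK
      apply hx
      intro i
      have := hKU x hxK i
      exact ⟨this.1, by linarith [this.2]⟩
  have hs' : Summable (UnitAddTorus.mFourierCoeff g) := by
    rw [show UnitAddTorus.mFourierCoeff g = _ from funext hco]
    exact hsum
  have := UnitAddTorus.hasSum_mFourier_series_apply_of_summable hs' (π t)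
  have h1 : g (π t) = M t := by
    change M (σ (π t)) = _
    rw [hσπ t]
    intro i
    have := hKU t ht i
    exact ⟨this.1, by linarith [this.2]⟩
  rw [h1] at this
  convert this using 2 with n
  rw [hco, smul_eq_mul]
  congr 1
  exact (mFourier_coe n t).symm


lemma lattice_series {m : EuclideanSpace ℝ (Fin d) → ℂ} (hm : Continuous m)
    {K : Set (EuclideanSpace ℝ (Fin d))} (hK : IsCompact K)
    (A : Matrix (Fin d) (Fin d) ℝ) (hA : IsUnit A.det) (c : ℝ) (hc0 : 0 < c)
    (hc : c < 2 * Real.pi) (x₁ : EuclideanSpace ℝ (Fin d)) (hKU : K ⊆ interior (lattPara A x₁))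
    (h0 : ∀ x, x ∉ K → m x = 0) :
    ∃ κ : ℝ, 0 ≤ κ ∧ ∃ a : (Fin d → ℤ) → ℂ, (∀ n, ‖a n‖ ≤ κ * ‖FT m (dualLatPt A c n)‖) ∧
      (Summable (fun n => ‖a n‖) → ∀ x ∈ K, HasSum (fun n => a n *
        Complex.exp ((⟪x, dualLatPt A c n⟫ : ℝ) * Complex.I)) (m x)) := by
  let B : (Fin d → ℝ) ≃L[ℝ] EuclideanSpace ℝ (Fin d) :=
    (Matrix.toLin'OfInv (Matrix.nonsing_inv_mul A hA)
      (Matrix.mul_nonsing_inv A hA)).toContinuousLinearEquiv.trans (EuclideanSpace.equiv (Fin d) ℝ).symm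
  have hB : ∀ t, B t = toE (A.mulVec t) := by
    intro t
    simp only [B, toE, ContinuousLinearEquiv.trans_apply]
    congr 1
  have hr0 : 0 < c / (2 * Real.pi) := by positivity
  have hr1 : c / (2 * Real.pi) < 1 := by rw [div_lt_one (by positivity)]; exact hc
  let P : (Fin d → ℝ) → EuclideanSpace ℝ (Fin d) := fun t => x₁ + B ((2 * Real.pi / c) • t)
  let Q : EuclideanSpace ℝ (Fin d) → (Fin d → ℝ) := fun x =>
    (c / (2 * Real.pi)) • B.symm (x - x₁)
  have hP : Continuous P := by fun_prop
  have hQ : Continuous Q := by fun_prop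
  have hQP : ∀ t, Q (P t) = t := by
    intro t
    simp only [P, Q, add_sub_cancel_left, ContinuousLinearEquiv.symm_apply_apply, smul_smul]
    rw [show c / (2 * Real.pi) * (2 * Real.pi / c) = 1 by field_simp, one_smul]
  have hPQ : ∀ x, P (Q x) = x := by
    intro x
    simp only [P, Q, smul_smul]
    rw [show 2 * Real.pi / c * (c / (2 * Real.pi)) = 1 by field_simp, one_smul]
    simp
  have hinner : ∀ t n, (⟪P t, dualLatPt A c n⟫ : ℝ) =
      ⟪x₁, dualLatPt A c n⟫ + 2 * Real.pi * ∑ i, (n i : ℝ) * t i := by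
    intro t n
    simp only [P, inner_add_left]
    congr 1
    rw [map_smul, inner_smul_left, hB]
    have hdet : IsUnit A.transpose.det := by rwa [Matrix.det_transpose]
    have : (⟪toE (A.mulVec t), dualLatPt A c n⟫ : ℝ) = c * ∑ i, (n i : ℝ) * t i := by
      have e1 : (⟪toE (A.mulVec t), dualLatPt A c n⟫ : ℝ) =
          (c • (A.transpose⁻¹.mulVec fun i => (n i : ℝ))) ⬝ᵥ (A.mulVec t) := by
        simp [dualLatPt, toE, PiLp.inner_apply, dotProduct, mul_comm]
      rw [e1, Matrix.dotProduct_mulVec, ← Matrix.mulVec_transpose, Matrix.mulVec_smul,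
        Matrix.mulVec_mulVec, Matrix.mul_nonsing_inv _ hdet, Matrix.one_mulVec, smul_dotProduct]
      rfl
    rw [this]
    simp
    field_simp
  have hbox : ∀ t ∈ Q '' K, ∀ i, t i ∈ Set.Ioo (0 : ℝ) 1 := by
    rintro _ ⟨x, hx, rfl⟩ i
    let Ψ : (Fin d → ℝ) ≃ₜ EuclideanSpace ℝ (Fin d) :=
      B.toHomeomorph.trans (Homeomorph.addLeft x₁)
    have e : lattPara A x₁ = Ψ '' (Set.univ.pi fun _ => Set.Icc 0 1) := by
      rw [lattPara]
      refine Set.image_congr fun t _ => ?_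
      rw [← hB]
      rfl
    have hx' := hKU hx
    rw [e, ← Homeomorph.image_interior, interior_pi_set Set.finite_univ] at hx'
    obtain ⟨u, hu, rfl⟩ := hx'
    have hui := hu i (Set.mem_univ _)
    rw [interior_Icc] at hui
    have : Q (Ψ u) = (c / (2 * Real.pi)) • u := by
      change (c / (2 * Real.pi)) • B.symm (x₁ + B u - x₁) = _
      simp
    rw [this]
    simp only [Pi.smul_apply, smul_eq_mul]
    exact ⟨mul_pos hr0 hui.1, by nlinarith [hui.1, hui.2]⟩
  -- change of variables
  obtain ⟨κ, hκ0, hκ⟩ : ∃ κ : ℝ, 0 ≤ κ ∧ ∀ h : EuclideanSpace ℝ (Fin d) → ℂ,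
      ∫ t, h (P t) = (κ : ℂ) * ∫ x, h x := by
    let B' : (Fin d → ℝ) ≃L[ℝ] EuclideanSpace ℝ (Fin d) :=
      (ContinuousLinearEquiv.smulLeft
        (Units.mk0 (2 * Real.pi / c) (by positivity) : ℝˣ)).trans B
    have hB' : ∀ t, P t = x₁ + B' t := fun t => rfl
    have hH : Measure.IsAddHaarMeasure (Measure.map B' (volume : Measure (Fin d → ℝ))) :=
      B'.isAddHaarMeasure_map _
    have hκ := Measure.isAddLeftInvariant_eq_smul
      (Measure.map B' (volume : Measure (Fin d → ℝ))) (volume : Measure (EuclideanSpace ℝ (Fin d)))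
    set κ : ℝ≥0 := Measure.addHaarScalarFactor
      (Measure.map B' (volume : Measure (Fin d → ℝ))) (volume : Measure (EuclideanSpace ℝ (Fin d)))
    refine ⟨κ, κ.2, fun h => ?_⟩
    have e1 : ∫ t, h (P t) =
        ∫ y, h (x₁ + y) ∂(Measure.map B' (volume : Measure (Fin d → ℝ))) := by
      exact (B'.toHomeomorph.measurableEmbedding.integral_map (μ := volume)
        (fun y => h (x₁ + y))).symm
    rw [e1, hκ, integral_smul_nnreal_measure, integral_add_left_eq_self]
    exact Complex.real_smul
  let M : (Fin d → ℝ) → ℂ := fun t => m (P t)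
  have hM0 : ∀ t, t ∉ Q '' K → M t = 0 := fun t ht => h0 _ fun hK => ht ⟨_, hK, hQP t⟩
  let b : (Fin d → ℤ) → ℂ := fun n =>
    ∫ t : Fin d → ℝ, Complex.exp (-(2 * Real.pi * Complex.I * ∑ i, (n i : ℂ) * t i)) * M t
  let w : (Fin d → ℤ) → ℂ := fun n =>
    Complex.exp ((⟪x₁, dualLatPt A c n⟫ : ℝ) * Complex.I)
  have hw : ∀ n, ‖w n‖ = 1 := fun n => Complex.norm_exp_ofReal_mul_I _
  have hb : ∀ n, b n = w n * (κ * ∫ x, m x *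
      Complex.exp (-(⟪x, dualLatPt A c n⟫ : ℝ) * Complex.I)) := by
    intro n
    rw [← hκ, ← integral_const_mul]
    refine integral_congr_ae (Filter.Eventually.of_forall fun t => ?_)
    simp only [M, w]
    rw [hinner, mul_comm, mul_left_comm, ← Complex.exp_add]
    congr 2
    push_cast
    ring
  set p : ℝ := (2 * Real.pi) ^ (-(d : ℝ) / 2) with hp
  have hp0 : 0 < p := by positivity
  have hbn : ∀ n, ‖b n‖ = κ * p⁻¹ * ‖FT m (dualLatPt A c n)‖ := by
    intro n
    rw [hb, FT, norm_mul, hw, one_mul, norm_mul, norm_mul, Complex.norm_real, Complex.norm_real,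
      Real.norm_of_nonneg hκ0]
    rw [← hp, Real.norm_of_nonneg hp0.le, mul_assoc, inv_mul_cancel_left₀ hp0.ne']
  refine ⟨κ * p⁻¹, by positivity, fun n => b n * (w n)⁻¹, ?_, ?_⟩
  · intro n
    rw [norm_mul, norm_inv, hw, inv_one, mul_one, hbn]
  · intro hsum x hx
    have hsum' : Summable b := by
      refine Summable.of_norm ?_
      simpa only [norm_mul, norm_inv, hw, inv_one, mul_one] using hsum
    have := fourier_series (M := M) (hm.comp hP) (hK.image hQ) hbox hM0 hsum' (Q x) ⟨x, hx, rfl⟩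
    have hMx : M (Q x) = m x := by simp only [M, hPQ]
    rw [hMx] at this
    convert this using 2 with n
    change b n * (w n)⁻¹ * _ = b n * _
    rw [mul_assoc]
    congr 1
    have e := hinner (Q x) n
    rw [hPQ] at e
    have hw0 : w n ≠ 0 := Complex.exp_ne_zero _
    rw [inv_mul_eq_iff_eq_mul₀ hw0, e]
    simp only [w]
    rw [← Complex.exp_add]
    congr 1
    push_cast
    ring

lemma FT_series {m f : EuclideanSpace ℝ (Fin d) → ℂ} (hf : Integrable f)
    {K : Set (EuclideanSpace ℝ (Fin d))} (hfK : ∀ x, x ∉ K → f x = 0)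
    {lam : (Fin d → ℤ) → EuclideanSpace ℝ (Fin d)} {a : (Fin d → ℤ) → ℂ}
    (ha : Summable fun n => ‖a n‖)
    (hser : ∀ x ∈ K, HasSum (fun n => a n * Complex.exp ((⟪x, lam n⟫ : ℝ) * Complex.I)) (m x))
    (ξ : EuclideanSpace ℝ (Fin d)) :
    HasSum (fun n => a n * FT f (ξ - lam n)) (FT (fun x => m x * f x) ξ) := by
  have hint : ∀ η : EuclideanSpace ℝ (Fin d),
      Integrable fun x => f x * Complex.exp (-(⟪x, η⟫ : ℝ) * Complex.I) := by
    intro η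
    refine hf.mul_bdd (c := 1) ?_ ?_
    · have : Continuous fun x : EuclideanSpace ℝ (Fin d) => (⟪x, η⟫ : ℝ) := by fun_prop
      exact Continuous.aestronglyMeasurable (by fun_prop)
    · filter_upwards with x
      rw [← Complex.ofReal_neg, Complex.norm_exp_ofReal_mul_I]
  have key := hasSum_integral_of_summable_integral_norm (μ := volume)
    (F := fun n x => a n * (f x * Complex.exp (-(⟪x, ξ - lam n⟫ : ℝ) * Complex.I)))
    (fun n => (hint _).const_mul _) (by
      have e : ∀ n, ∫ x, ‖a n * (f x * Complex.exp (-(⟪x, ξ - lam n⟫ : ℝ) * Complex.I))‖ =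
          ‖a n‖ * ∫ x, ‖f x‖ := by
        intro n
        rw [← integral_const_mul]
        congr 1
        ext x
        rw [norm_mul, norm_mul, ← Complex.ofReal_neg, Complex.norm_exp_ofReal_mul_I, mul_one]
      simp only [e]
      exact ha.mul_right _)
  have e2 : ∫ x, ∑' n, a n * (f x * Complex.exp (-(⟪x, ξ - lam n⟫ : ℝ) * Complex.I)) =
      ∫ x, m x * f x * Complex.exp (-(⟪x, ξ⟫ : ℝ) * Complex.I) := by
    congr 1
    ext x
    by_cases hx : x ∈ K
    · have := ((hser x hx).mul_right (f x * Complex.exp (-(⟪x, ξ⟫ : ℝ) * Complex.I))).tsum_eq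
      rw [← mul_assoc] at this
      rw [← this]
      congr 1
      ext n
      have e3 : Complex.exp (-(⟪x, ξ - lam n⟫ : ℝ) * Complex.I) =
          Complex.exp ((⟪x, lam n⟫ : ℝ) * Complex.I) *
            Complex.exp (-(⟪x, ξ⟫ : ℝ) * Complex.I) := by
        rw [← Complex.exp_add, inner_sub_right]
        congr 1
        push_cast
        ring
      rw [e3]
      ring
    · simp [hfK x hx]
  rw [e2] at key
  have := key.mul_left (((2 * Real.pi) ^ (-(d : ℝ) / 2) : ℝ) : ℂ)
  have e4 : (fun n => a n * FT f (ξ - lam n)) = fun n =>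
      (((2 * Real.pi) ^ (-(d : ℝ) / 2) : ℝ) : ℂ) *
        ∫ x, a n * (f x * Complex.exp (-(⟪x, ξ - lam n⟫ : ℝ) * Complex.I)) := by
    ext n
    rw [integral_const_mul, FT, mul_left_comm]
  rw [e4]
  exact this

lemma rpow_add_le' {x y q : ℝ} (hx : 0 ≤ x) (hy : 0 ≤ y) (hq : 1 ≤ q) :
    (x + y) ^ q ≤ (2 : ℝ) ^ (q - 1) * (x ^ q + y ^ q) := by
  have := NNReal.rpow_add_le_mul_rpow_add_rpow ⟨x, hx⟩ ⟨y, hy⟩ hq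
  exact_mod_cast this

theorem stmt15 {d : ℕ} (s q : ℝ) (hs : 1 < s) (hq : 1 ≤ q)
    (ω : EuclideanSpace ℝ (Fin d) → ℝ) (hω : IsSAdmissible s ω)
    (A : Matrix (Fin d) (Fin d) ℝ) (hA : IsUnit A.det)
    (c : ℝ) (hc0 : 0 < c) (hc : c < 2 * Real.pi) (x₁ : EuclideanSpace ℝ (Fin d))
    (f : EuclideanSpace ℝ (Fin d) → ℂ) (hf : Integrable f) (hfc : HasCompactSupport f)
    (hsupp : tsupport f ⊆ interior (lattPara A x₁))
    (Γ₀ Γ : Set (EuclideanSpace ℝ (Fin d)))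
    (h₀o : IsOpen Γ₀) (h₀c : IsCone Γ₀) (hΓo : IsOpen Γ) (hΓc : IsCone Γ)
    (hsub : closure Γ₀ \ {0} ⊆ Γ)
    (h : Summable fun k : Fin d → ℤ =>
      Γ.indicator (fun ξ => (‖FT f ξ‖ * ω ξ) ^ q) (dualLatPt A c k)) :
    ∀ ψ : EuclideanSpace ℝ (Fin d) → ℂ, IsSCutoff s ψ →
      Summable fun k : Fin d → ℤ =>
        Γ₀.indicator (fun ξ => (‖FT (fun x => ψ x * f x) ξ‖ * ω ξ) ^ q)
          (dualLatPt A c k) := by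
  intro ψ hψ
  have hq0 : 0 < q := by linarith
  have hs0 : 0 < s := by linarith
  obtain ⟨m, hmc, hmd, hmψ, K', hK', hK'U, hm0⟩ :=
    exists_local hs hψ hfc.isCompact isOpen_interior hsupp
  have hfun : (fun x => ψ x * f x) = fun x => m x * f x := by
    ext x
    by_cases hx : x ∈ tsupport f
    · rw [hmψ x hx]
    · rw [image_eq_zero_of_notMem_tsupport hx, mul_zero, mul_zero]
  obtain ⟨κ, hκ0, a, haκ, haS⟩ := lattice_series hmc (hK'.union hfc.isCompact) A hA c hc0 hc x₁
    (Set.union_subset hK'U hsupp) (fun x hx => hm0 x fun h => hx (Or.inl h))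
  have hfK : ∀ x, x ∉ K' ∪ tsupport f → f x = 0 := fun x hx =>
    image_eq_zero_of_notMem_tsupport fun h => hx (Or.inr h)
  have haN : ∀ N : ℝ, 0 < N → ∃ C : ℝ, 0 ≤ C ∧
      ∀ n, ‖a n‖ ≤ C * Real.exp (-N * ‖dualLatPt A c n‖ ^ (1 / s)) := by
    intro N hN
    obtain ⟨C, hC, hCb⟩ := hmd N hN
    refine ⟨κ * C, by positivity, fun n => (haκ n).trans ?_⟩
    rw [mul_assoc]
    exact mul_le_mul_of_nonneg_left (hCb _) hκ0
  set lam := dualLatPt A c with hlam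
  set e : (Fin d → ℤ) → ℝ := fun k => Real.exp (-(‖lam k‖ ^ (1 / s))) with he
  have hes : Summable e := summable_exp hs A hA c hc0
  have hasum : Summable fun n => ‖a n‖ := by
    obtain ⟨C, hC, hCb⟩ := haN 1 one_pos
    refine Summable.of_nonneg_of_le (fun _ => norm_nonneg _) (fun n => ?_) (hes.mul_left C)
    simpa [he] using hCb n
  have hFT := FT_series (m := m) hf hfK hasum (haS hasum)
  obtain ⟨-, hωpos, v, -, hvpos, -, -, C₀, k₀, C₁, hC₀, hk₀, hC₁, hv, hωv⟩ := hω
  obtain ⟨Bf, hBf0, hBf⟩ : ∃ Bf : ℝ, 0 ≤ Bf ∧ ∀ ξ, ‖FT f ξ‖ ≤ Bf :=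
    ⟨_, by positivity, fun ξ => norm_FT_le f ξ⟩
  obtain ⟨δ, hδ, hsep⟩ := cone_sep h₀c hΓo hΓc hsub
  set g : (Fin d → ℤ) → ℝ := fun k => Γ.indicator (fun ξ => ‖FT f ξ‖ * ω ξ) (lam k) with hg
  have hg0 : ∀ k, 0 ≤ g k := fun k =>
    Set.indicator_nonneg (fun ξ _ => mul_nonneg (norm_nonneg _) (hωpos ξ).le) _
  have hgs : Summable fun k => g k ^ q := by
    refine h.congr fun k => ?_
    by_cases hk : lam k ∈ Γ
    · simp [hg, hk]
    · simp [hg, hk, Real.zero_rpow hq0.ne']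
  set b : (Fin d → ℤ) → ℝ := fun j => ‖a j‖ * (C₁ * v (lam j)) with hb
  have hb0 : ∀ j, 0 ≤ b j := fun j => by have := hvpos (lam j); positivity
  have hbs : Summable b := by
    obtain ⟨C, hC, hCb⟩ := haN (k₀ + 1) (by linarith)
    refine Summable.of_nonneg_of_le hb0 (fun j => ?_) (hes.mul_left (C * (C₁ * C₀)))
    have h1 : v (lam j) ≤ _ := hv (lam j)
    have h2 : b j ≤ C * Real.exp (-(k₀ + 1) * ‖lam j‖ ^ (1 / s)) *
        (C₁ * (C₀ * Real.exp (k₀ * ‖lam j‖ ^ (1 / s)))) :=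
      mul_le_mul (hCb j) (mul_le_mul_of_nonneg_left h1 hC₁.le)
        (by have := hvpos (lam j); positivity) (by positivity)
    refine h2.trans (le_of_eq ?_)
    have h3 : e j = Real.exp (-(k₀ + 1) * ‖lam j‖ ^ (1 / s)) *
        Real.exp (k₀ * ‖lam j‖ ^ (1 / s)) := by
      rw [← Real.exp_add]; simp only [he]; congr 1; ring
    rw [h3]; ring
  obtain ⟨hY1, hY2⟩ := young hq hb0 hg0 hbs hgs
  set r : ℝ := δ ^ (1 / s) with hr
  have hr0 : 0 < r := Real.rpow_pos_of_pos hδ _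
  obtain ⟨CN, hCN, hCNb⟩ := haN (1 + (k₀ + 1) / r) (by positivity)
  set D : ℝ := CN * Bf * (C₁ * C₀ * ω 0) with hD
  have hω0 := hωpos 0
  have hD0 : 0 ≤ D := by positivity
  have hterm : ∀ k, lam k ∈ Γ₀ → ∀ j, ‖a j * FT f (lam k - lam j)‖ * ω (lam k) ≤
      b j * g (k - j) + D * e k * e j := by
    intro k hk j
    have hkj : lam (k - j) = lam k - lam j := dualLatPt_sub A c k j
    have hee : 0 ≤ D * e k * e j := by
      simp only [he]; positivity
    rw [norm_mul]
    by_cases hkΓ : lam (k - j) ∈ Γ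
    · have h1 : ω (lam k) ≤ C₁ * v (lam j) * ω (lam (k - j)) := by
        have := hωv (lam j) (lam (k - j))
        rw [hkj, add_sub_cancel] at this
        rwa [hkj]
      have h2 : b j * g (k - j) = ‖a j‖ * ‖FT f (lam k - lam j)‖ *
          (C₁ * v (lam j) * ω (lam (k - j))) := by
        simp only [hg, hb, Set.indicator_of_mem hkΓ]
        rw [hkj]; ring
      rw [h2]
      have := mul_le_mul_of_nonneg_left h1 (mul_nonneg (norm_nonneg (a j))
        (norm_nonneg (FT f (lam k - lam j))))
      linarith
    · have h1 : δ * ‖lam k‖ ≤ ‖lam j‖ := by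
        have := hsep _ hk _ hkΓ
        rwa [hkj, sub_sub_cancel] at this
      have h2 : r * ‖lam k‖ ^ (1 / s) ≤ ‖lam j‖ ^ (1 / s) := by
        rw [hr, ← Real.mul_rpow hδ.le (norm_nonneg _)]
        exact Real.rpow_le_rpow (by positivity) h1 (by positivity)
      have h3 : ω (lam k) ≤ C₁ * (C₀ * Real.exp (k₀ * ‖lam k‖ ^ (1 / s))) * ω 0 := by
        have := hωv (lam k) 0
        rw [add_zero] at this
        exact this.trans (mul_le_mul_of_nonneg_right
          (mul_le_mul_of_nonneg_left (hv _) hC₁.le) hω0.le)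
      have h4 : ‖a j‖ * ‖FT f (lam k - lam j)‖ * ω (lam k) ≤
          CN * Real.exp (-(1 + (k₀ + 1) / r) * ‖lam j‖ ^ (1 / s)) * Bf *
            (C₁ * (C₀ * Real.exp (k₀ * ‖lam k‖ ^ (1 / s))) * ω 0) :=
        mul_le_mul (mul_le_mul (hCNb j) (hBf _) (norm_nonneg _) (by positivity)) h3
          (hωpos _).le (by positivity)
      have h5 : Real.exp (-(1 + (k₀ + 1) / r) * ‖lam j‖ ^ (1 / s)) *
          Real.exp (k₀ * ‖lam k‖ ^ (1 / s)) ≤ e k * e j := by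
        simp only [he]
        rw [← Real.exp_add, ← Real.exp_add]
        refine Real.exp_le_exp.2 ?_
        have h6 : (k₀ + 1) * ‖lam k‖ ^ (1 / s) ≤ (k₀ + 1) / r * ‖lam j‖ ^ (1 / s) := by
          rw [div_mul_eq_mul_div, le_div_iff₀ hr0]
          have := mul_le_mul_of_nonneg_left h2 (show 0 ≤ k₀ + 1 by linarith)
          linarith
        linarith
      have h7 := mul_le_mul_of_nonneg_left h5 hD0
      have h8 := mul_nonneg (hb0 j) (hg0 (k - j))
      simp only [hD] at h7 ⊢
      linarith
  set S : ℝ := ∑' j, e j with hS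
  have hS0 : 0 ≤ S := tsum_nonneg fun j => (Real.exp_pos _).le
  have hbound : ∀ k, lam k ∈ Γ₀ → ‖FT (fun x => m x * f x) (lam k)‖ * ω (lam k) ≤
      (∑' j, b j * g (k - j)) + D * S * e k := by
    intro k hk
    have hs1 : Summable fun j => ‖a j * FT f (lam k - lam j)‖ := by
      refine Summable.of_nonneg_of_le (fun _ => norm_nonneg _) (fun j => ?_) (hasum.mul_right Bf)
      rw [norm_mul]
      exact mul_le_mul_of_nonneg_left (hBf _) (norm_nonneg _)
    have hn : ‖FT (fun x => m x * f x) (lam k)‖ ≤ ∑' j, ‖a j * FT f (lam k - lam j)‖ := by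
      rw [← (hFT (lam k)).tsum_eq]
      exact norm_tsum_le_tsum_norm hs1
    calc _ ≤ (∑' j, ‖a j * FT f (lam k - lam j)‖) * ω (lam k) :=
          mul_le_mul_of_nonneg_right hn (hωpos _).le
      _ = ∑' j, ‖a j * FT f (lam k - lam j)‖ * ω (lam k) := tsum_mul_right.symm
      _ ≤ ∑' j, (b j * g (k - j) + D * e k * e j) :=
          (hs1.mul_right _).tsum_le_tsum (hterm k hk) ((hY1 k).add (hes.mul_left _))
      _ = _ := by
          rw [(hY1 k).tsum_add (hes.mul_left _), tsum_mul_left]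
          ring
  have hfin : Summable fun k => (2 : ℝ) ^ (q - 1) *
      ((∑' j, b j * g (k - j)) ^ q + (D * S) ^ q * e k) :=
    (hY2.add (hes.mul_left _)).mul_left _
  refine Summable.of_nonneg_of_le (fun k => ?_) (fun k => ?_) hfin
  · exact Set.indicator_nonneg
      (fun ξ _ => Real.rpow_nonneg (mul_nonneg (norm_nonneg _) (hωpos ξ).le) _) _
  · have hY0 : 0 ≤ ∑' j, b j * g (k - j) := tsum_nonneg fun j => mul_nonneg (hb0 j) (hg0 _)
    have he0 : 0 ≤ e k := (Real.exp_pos _).le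
    have he1 : e k ≤ 1 := Real.exp_le_one_iff.2 (by simp only [Left.neg_nonpos_iff]; positivity)
    by_cases hk : lam k ∈ Γ₀
    · rw [Set.indicator_of_mem hk, hfun]
      have hZ0 : 0 ≤ D * S * e k := by positivity
      calc _ ≤ ((∑' j, b j * g (k - j)) + D * S * e k) ^ q :=
            Real.rpow_le_rpow (mul_nonneg (norm_nonneg _) (hωpos _).le) (hbound k hk) hq0.le
        _ ≤ (2 : ℝ) ^ (q - 1) * ((∑' j, b j * g (k - j)) ^ q + (D * S * e k) ^ q) :=
            rpow_add_le' hY0 hZ0 hq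
        _ ≤ _ := by
            rw [Real.mul_rpow (by positivity) he0]
            have : e k ^ q ≤ e k := Real.rpow_le_self_of_le_one he0 he1 hq
            gcongr
    · rw [Set.indicator_of_notMem hk]
      positivity

end Paper
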